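/- Suppose D is positive definite. Then the quadratic polynomial P(λ) is hyperbolic, i.e., there exists μ₀ ∈ ℝ with −P(μ₀) positive definite, if and only if S(λ) is a definite pencil, i.e., there exists μ₁ ∈ ℝ with S(μ₁) positive definite. Moreover, every real μ with −P(μ) positive definite satisfies μ < 0, and every real μ with S(μ) positive definite satisfies μ < 0. -/

import Mathlib

open Matrix ComplexOrder

/-!
A Hermitian block matrix whose lower right corner is `c • 1` with `c > 0` is positive definite
exactly when its Schur complement with respect to that corner is. For real `μ < 0` the corner of
`S(μ)` is `(-μ) • 1`, and the Schur complement, scaled by `-μ`, is `-P(μ)`. Both definiteness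
conditions force `μ < 0`: for `μ ≥ 0` all three terms of `P(μ)` are positive semidefinite, while the
lower right corner `-μ • 1` of `S(μ)` has to be positive definite. So they hold for the same `μ`.
-/

lemma posDef_smul_iff {K m : Type*} [Field K] [PartialOrder K] [PosMulReflectLT K]
    [StarRing K] [StarOrderedRing K] {A : Matrix m m K} {c : K} (hc : 0 < c) :
    (c • A).PosDef ↔ A.PosDef where
  mp h := by simpa only [inv_smul_smul₀ hc.ne'] using h.smul (inv_pos.2 hc)
  mpr h := h.smul hc

section SchurComplement

variable {𝕜 m k : Type*} [RCLike 𝕜] [DecidableEq k]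

lemma posDef_fromBlocks_iff_posDef_schurComplement [Finite m] [Fintype k] (A : Matrix m m 𝕜)
    (B : Matrix m k 𝕜) {C : Matrix k k 𝕜} (hC : C.PosDef) :
    (fromBlocks A B Bᴴ C).PosDef ↔ (A - B * C⁻¹ * Bᴴ).PosDef := by
  classical
  have := Fintype.ofFinite m
  let _ := hC.isUnit.invertible
  have posSemidef_iff := PosDef.fromBlocks₂₂ A B hC
  have isUnit_iff : IsUnit (fromBlocks A B Bᴴ C) ↔ IsUnit (A - B * C⁻¹ * Bᴴ) := by
    rw [isUnit_fromBlocks_iff_of_invertible₂₂, invOf_eq_nonsing_inv]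
  constructor
  · intro h
    exact (posSemidef_iff.1 h.posSemidef).posDef_iff_isUnit.2 (isUnit_iff.1 h.isUnit)
  · intro h
    exact (posSemidef_iff.2 h.posSemidef).posDef_iff_isUnit.2 (isUnit_iff.2 h.isUnit)

lemma posDef_fromBlocks_smul_one_iff [Finite m] [Fintype k] (A : Matrix m m 𝕜) (B : Matrix m k 𝕜)
    {c : 𝕜} (hc : 0 < c) :
    (fromBlocks A B Bᴴ (c • 1)).PosDef ↔ (c • A - B * Bᴴ).PosDef := by
  have inv_corner : (c • (1 : Matrix k k 𝕜))⁻¹ = c⁻¹ • 1 :=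
    inv_eq_right_inv (by rw [smul_mul_smul_comm, mul_one, mul_inv_cancel₀ hc.ne', one_smul])
  have scaled_schurComplement :
      c • (A - B * (c • (1 : Matrix k k 𝕜))⁻¹ * Bᴴ) = c • A - B * Bᴴ := by
    rw [inv_corner, Matrix.mul_smul, Matrix.mul_one, Matrix.smul_mul, smul_sub,
      smul_inv_smul₀ hc.ne']
  rw [posDef_fromBlocks_iff_posDef_schurComplement A B (PosDef.one.smul hc), ← posDef_smul_iff hc,
    scaled_schurComplement]

end SchurComplement

section Definitions

variable {R m k : Type*} [CommRing R] [Star R]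

/-- The quadratic matrix polynomial `P(z) = z² M + z D + G G*`, which is hyperbolic when `-P(μ)` is
positive definite for some real `μ`. -/
def quadraticPolynomial [Fintype k] (M D : Matrix m m R) (G : Matrix m k R) (z : R) :
    Matrix m m R :=
  z ^ 2 • M + z • D + G * Gᴴ

/-- The pencil `S(z) = z diag(M, -I) + [[D, G], [G*, 0]]`, a linearization of
`quadraticPolynomial M D G` that is Hermitian at real `z` when `M` and `D` are. -/
def blockPencil [DecidableEq k] (M D : Matrix m m R) (G : Matrix m k R) (z : R) :
    Matrix (m ⊕ k) (m ⊕ k) R :=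
  z • fromBlocks M 0 0 (-1) + fromBlocks D G Gᴴ 0

lemma neg_quadraticPolynomial_eq [Fintype k] (M D : Matrix m m R) (G : Matrix m k R) (z : R) :
    -quadraticPolynomial M D G z = -z • (z • M + D) - G * Gᴴ := by
  unfold quadraticPolynomial
  module

lemma blockPencil_eq_fromBlocks [DecidableEq k] (M D : Matrix m m R) (G : Matrix m k R) (z : R) :
    blockPencil M D G z = fromBlocks (z • M + D) G Gᴴ (-z • 1) := by
  simp [blockPencil, fromBlocks_smul, fromBlocks_add]

end Definitions

section OrderedRing

variable {R m k : Type*} [CommRing R] [PartialOrder R] [StarRing R]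
  {M D : Matrix m m R} {G : Matrix m k R} {z : R}

lemma posSemidef_quadraticPolynomial [StarOrderedRing R] [Finite m] [Fintype k]
    (hM : M.PosSemidef) (hD : D.PosSemidef) (hz : 0 ≤ z) :
    (quadraticPolynomial M D G z).PosSemidef :=
  ((hM.smul (pow_nonneg hz 2)).add (hD.smul hz)).add (posSemidef_self_mul_conjTranspose G)

lemma neg_of_posDef_blockPencil [IsOrderedAddMonoid R] [Nontrivial R] [Nonempty k] [DecidableEq k]
    (h : (blockPencil M D G z).PosDef) : z < 0 := by
  obtain ⟨j⟩ := ‹Nonempty k›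
  rw [blockPencil_eq_fromBlocks] at h
  have corner_pos : 0 < (-z • (1 : Matrix k k R)) j j := h.diag_pos (i := Sum.inr j)
  simpa using corner_pos

end OrderedRing

section RCLike

variable {𝕜 m k : Type*} [RCLike 𝕜] [Finite m] [Fintype k]
  {M D : Matrix m m 𝕜} {G : Matrix m k 𝕜}

lemma neg_of_posDef_neg_quadraticPolynomial [Nonempty m] (hM : M.PosSemidef)
    (hD : D.PosSemidef) {μ : ℝ} (h : (-quadraticPolynomial M D G (μ : 𝕜)).PosDef) : μ < 0 := by
  by_contra! hμ
  obtain ⟨i⟩ := ‹Nonempty m›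
  have diag_nonneg : 0 ≤ quadraticPolynomial M D G (μ : 𝕜) i i :=
    (posSemidef_quadraticPolynomial hM hD (RCLike.ofReal_nonneg.2 hμ)).diag_nonneg
  have diag_neg : quadraticPolynomial M D G (μ : 𝕜) i i < 0 := neg_pos.1 h.diag_pos
  exact diag_neg.not_ge diag_nonneg

lemma posDef_neg_quadraticPolynomial_iff_posDef_blockPencil [DecidableEq k] {z : 𝕜} (hz : z < 0) :
    (-quadraticPolynomial M D G z).PosDef ↔ (blockPencil M D G z).PosDef := by
  rw [neg_quadraticPolynomial_eq, blockPencil_eq_fromBlocks,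
    posDef_fromBlocks_smul_one_iff _ _ (neg_pos.2 hz)]

theorem stmt10_general [Nonempty m] [Nonempty k] [DecidableEq k]
    (hM : M.PosSemidef) (hD : D.PosSemidef) (G : Matrix m k 𝕜) :
    (∀ μ : ℝ, (-quadraticPolynomial M D G (μ : 𝕜)).PosDef ↔
      (blockPencil M D G (μ : 𝕜)).PosDef) ∧
    (∀ μ : ℝ, (-quadraticPolynomial M D G (μ : 𝕜)).PosDef → μ < 0) ∧
    (∀ μ : ℝ, (blockPencil M D G (μ : 𝕜)).PosDef → μ < 0) := by
  have neg_of_quadratic (μ : ℝ) : (-quadraticPolynomial M D G (μ : 𝕜)).PosDef → μ < 0 :=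
    neg_of_posDef_neg_quadraticPolynomial hM hD
  have neg_of_pencil (μ : ℝ) (h : (blockPencil M D G (μ : 𝕜)).PosDef) : μ < 0 :=
    RCLike.ofReal_lt_zero.1 (neg_of_posDef_blockPencil h)
  have quadratic_iff_pencil {μ : ℝ} (hμ : μ < 0) :
      (-quadraticPolynomial M D G (μ : 𝕜)).PosDef ↔ (blockPencil M D G (μ : 𝕜)).PosDef :=
    posDef_neg_quadraticPolynomial_iff_posDef_blockPencil (RCLike.ofReal_lt_zero.2 hμ)
  refine ⟨fun μ => ⟨fun h => ?_, fun h => ?_⟩, neg_of_quadratic, neg_of_pencil⟩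
  · exact (quadratic_iff_pencil (neg_of_quadratic μ h)).1 h
  · exact (quadratic_iff_pencil (neg_of_pencil μ h)).2 h

end RCLike

/-- For `D` positive definite: `P(λ)` is hyperbolic (there is a real `μ₀` with `−P(μ₀) > 0`)
iff `S(λ)` is a definite pencil (there is a real `μ₁` with `S(μ₁) > 0`); moreover every real
`μ` with `−P(μ) > 0` satisfies `μ < 0`, and every real `μ` with `S(μ) > 0` satisfies `μ < 0`. -/
theorem stmt10 {n r : ℕ} (hn : 0 < n) (hr : 0 < r) (hrn : r ≤ n)
    (M D : Matrix (Fin n) (Fin n) ℂ) (hM : M.PosDef) (hD : D.PosDef)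
    (G : Matrix (Fin n) (Fin r) ℂ) (hG : G.rank = r)
    (P : ℂ → Matrix (Fin n) (Fin n) ℂ)
    (hP : ∀ z : ℂ, P z = z ^ 2 • M + z • D + G * Gᴴ)
    (S : ℂ → Matrix (Fin n ⊕ Fin r) (Fin n ⊕ Fin r) ℂ)
    (hS : ∀ z : ℂ, S z = z • Matrix.fromBlocks M 0 0 (-1) + Matrix.fromBlocks D G Gᴴ 0) :
    ((∃ μ : ℝ, (-(P (μ : ℂ))).PosDef) ↔ (∃ μ : ℝ, (S (μ : ℂ)).PosDef)) ∧
    (∀ μ : ℝ, (-(P (μ : ℂ))).PosDef → μ < 0) ∧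
    (∀ μ : ℝ, (S (μ : ℂ)).PosDef → μ < 0) := by
  obtain rfl : P = quadraticPolynomial M D G := funext hP
  obtain rfl : S = blockPencil M D G := funext hS
  have : Nonempty (Fin n) := Fin.pos_iff_nonempty.1 hn
  have : Nonempty (Fin r) := Fin.pos_iff_nonempty.1 hr
  exact (stmt10_general hM.posSemidef hD.posSemidef G).imp_left exists_congr
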